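/- arXiv:2501.14421 — 2 statements merged into one kernel-verified Lean document; each statement's English description precedes it below -/
import Mathlib

section
/- Correctness of snapshot reads as a list lemma: if Cut t H₁ H, then scanning H from the most recent element for the first pair whose timestamp is strictly less than t yields exactly the last element of the prefix H₁, i.e., H.reverse.find? (fun p => p.2 < t) = H₁.getLast?; in particular the scan returns none if and only if H₁ = []. -/
/-- `Cut t H₁ H`: the timestamp `t` cuts the history `H` with prefix `H₁`. -/
def Cut {V : Type*} (t : ℕ) (H₁ H : List (V × ℕ)) : Prop :=
  ∃ H₂ : List (V × ℕ), H = H₁ ++ H₂ ∧ (∀ p ∈ H₁, p.2 < t) ∧ (∀ p ∈ H₂, t < p.2)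

section

variable {α : Type*} {p : α → Bool} {l₁ l₂ : List α}

theorem filter_append_eq_left (h₁ : ∀ a ∈ l₁, p a) (h₂ : ∀ a ∈ l₂, ¬ p a) :
    (l₁ ++ l₂).filter p = l₁ := by
  rw [List.filter_append, List.filter_eq_self.mpr h₁, List.filter_eq_nil_iff.mpr h₂,
    List.append_nil]

theorem cut_read_correct_general (h₁ : ∀ a ∈ l₁, p a) (h₂ : ∀ a ∈ l₂, ¬ p a) :
    (l₁ ++ l₂).reverse.find? p = l₁.getLast? ∧
    ((l₁ ++ l₂).reverse.find? p = none ↔ l₁ = []) := by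
  have read_eq : (l₁ ++ l₂).reverse.find? p = l₁.getLast? := by
    rw [← List.getLast?_filter, filter_append_eq_left h₁ h₂]
  exact ⟨read_eq, by rw [read_eq, List.getLast?_eq_none_iff]⟩

end

theorem cut_read_correct {V : Type*} (t : ℕ) (H₁ H : List (V × ℕ))
    (h : Cut t H₁ H) :
    H.reverse.find? (fun p => p.2 < t) = H₁.getLast? ∧
    (H.reverse.find? (fun p => p.2 < t) = none ↔ H₁ = []) := by
  obtain ⟨H₂, rfl, before, after⟩ := h
  exact cut_read_correct_general (fun q hq => decide_eq_true (before q hq))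
    (fun q hq => by simpa using (after q hq).le)
end

section
/- Monotonicity of snapshots: if Cut t H₁ H and Cut t' H₁' H with t ≤ t', then H₁ is a prefix of H₁' (H₁ <+: H₁'). That is, the start snapshot taken at an earlier start timestamp is a prefix of the start snapshot taken at a later start timestamp of the same key's history. -/
theorem isPrefix_of_append_eq_append_of_disjoint {α : Type*} {l₁ l₂ l₁' l₂' : List α}
    (h : l₁ ++ l₂ = l₁' ++ l₂') (hdisj : l₁.Disjoint l₂') : l₁ <+: l₁' := by
  rcases List.append_eq_append_iff.mp h with ⟨r, rfl, -⟩ | ⟨overlap, rfl, rfl⟩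
  · exact List.prefix_append l₁ r
  · have overlap_eq_nil : overlap = [] := List.eq_nil_iff_forall_not_mem.mpr fun _ ha ↦
      hdisj (List.mem_append_right l₁' ha) (List.mem_append_left l₂ ha)
    rw [overlap_eq_nil, List.append_nil]

theorem cut_mono_general {V T : Type*} [Preorder T] {t t' : T} {H₁ H₂ H₁' H₂' : List (V × T)}
    (h : H₁ ++ H₂ = H₁' ++ H₂') (hlt : ∀ p ∈ H₁, p.2 < t) (hgt : ∀ p ∈ H₂', t' < p.2)
    (htt' : t ≤ t') : H₁ <+: H₁' :=
  isPrefix_of_append_eq_append_of_disjoint h fun p hp hp' ↦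
    ((hlt p hp).trans_le htt').asymm (hgt p hp')

theorem cut_mono {V : Type*} (t t' : ℕ) (H H₁ H₁' : List (V × ℕ))
    (h1 : Cut t H₁ H) (h2 : Cut t' H₁' H) (htt' : t ≤ t') : H₁ <+: H₁' := by
  obtain ⟨_, rfl, hlt, -⟩ := h1
  obtain ⟨_, h, -, hgt⟩ := h2
  exact cut_mono_general h hlt hgt htt'
end
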